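/- arXiv:2211.09481 — 2 statements merged into one kernel-verified Lean document; each statement's English description precedes it below -/
import Mathlib

section
/- Let A = [a_1, a_2] ∈ ℝ^{2n×2} with ω := a_1^T J_{2n} a_2 ≠ 0. Set r_{11} = √|ω|, r_{22} = sign(ω)·r_{11}, s_1 = a_1/r_{11}, s_2 = a_2/r_{22}, S = [s_1, s_2] and R = diag(r_{11}, r_{22}). Then S ∈ Sp(2,2n) and A = S R. Moreover, this diagonal elementary SR (DESR) decomposition is unique: if A = S' R' with S' ∈ Sp(2,2n) and R' = diag(r'_{11}, r'_{22}) satisfying 0 < r'_{11} = |r'_{22}|, then S' = S and R' = R. -/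
/-!
Everything reduces to the skew-symmetric bilinear form `B(u, v) = uᵀ J v`: its diagonal vanishes,
so a two-column matrix `X = [x₁, x₂]` lies in `Sp(2, 2n)` exactly when `B(x₁, x₂) = 1`
(`mem_SpStiefel_one_iff`). For existence, `B(s₁, s₂) = ω / (r₁₁ r₂₂)` and
`r₁₁ r₂₂ = sign(ω) |ω| = ω`. For uniqueness, `A = S' diag(d₁, d₂)` forces `ω = d₁ d₂`; together
with `0 < d₁ = |d₂|` this gives `|ω| = d₁²`, so `d₁ = r₁₁`; cancelling `r₁₁` in
`r₁₁ d₂ = ω = r₁₁ r₂₂` gives `d₂ = r₂₂`, and `S'` is recovered by dividing the columns of `A`.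
-/

open Matrix

noncomputable section

/-- The Poisson matrix `J_{2m} = [[0, I_m], [-I_m, 0]]`. -/
def PoissonJ (m : ℕ) : Matrix (Fin (2 * m)) (Fin (2 * m)) ℝ :=
  Matrix.of fun i j =>
    if (j : ℕ) = (i : ℕ) + m then (1 : ℝ)
    else if (i : ℕ) = (j : ℕ) + m then -1 else 0

/-- The symplectic Stiefel manifold `Sp(2k, 2n)`. -/
def SpStiefel (k n : ℕ) : Set (Matrix (Fin (2 * n)) (Fin (2 * k)) ℝ) :=
  {X | Xᵀ * PoissonJ n * X = PoissonJ k}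

theorem PoissonJ_transpose (m : ℕ) : (PoissonJ m)ᵀ = -PoissonJ m := by
  ext i j
  have hi := i.isLt
  simp only [PoissonJ, Matrix.transpose_apply, Matrix.of_apply, Matrix.neg_apply]
  split_ifs <;> first | omega | norm_num

theorem PoissonJ_form_swap {m : ℕ} (u v : Fin (2 * m) → ℝ) :
    u ⬝ᵥ (PoissonJ m *ᵥ v) = -(v ⬝ᵥ (PoissonJ m *ᵥ u)) := by
  rw [Matrix.dotProduct_mulVec, ← Matrix.mulVec_transpose, PoissonJ_transpose,
    Matrix.neg_mulVec, neg_dotProduct, dotProduct_comm]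

theorem PoissonJ_form_self {m : ℕ} (u : Fin (2 * m) → ℝ) :
    u ⬝ᵥ (PoissonJ m *ᵥ u) = 0 := by
  linarith [PoissonJ_form_swap u u]

theorem transpose_mul_PoissonJ_mul_apply {n k : ℕ}
    (X : Matrix (Fin (2 * n)) (Fin (2 * k)) ℝ) (i j : Fin (2 * k)) :
    (Xᵀ * PoissonJ n * X) i j = (fun l => X l i) ⬝ᵥ (PoissonJ n *ᵥ fun l => X l j) := by
  rw [Matrix.mul_assoc]
  rfl

/-- By skew-symmetry the four scalar equations in `Xᵀ J X = J₂` collapse to the single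
normalization `x₁ᵀ J x₂ = 1`. The index bounds are arguments so that the column indices match
any proof of them. -/
theorem mem_SpStiefel_one_iff {n : ℕ} (X : Matrix (Fin (2 * n)) (Fin (2 * 1)) ℝ)
    (h0 : 0 < 2 * 1) (h1 : 1 < 2 * 1) :
    X ∈ SpStiefel 1 n ↔
      (fun i => X i ⟨0, h0⟩) ⬝ᵥ (PoissonJ n *ᵥ fun i => X i ⟨1, h1⟩) = 1 := by
  constructor
  · intro h
    have h01 := congrFun (congrFun (show Xᵀ * PoissonJ n * X = PoissonJ 1 from h)
      ⟨0, h0⟩) ⟨1, h1⟩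
    rw [transpose_mul_PoissonJ_mul_apply] at h01
    simpa [PoissonJ] using h01
  · intro h
    change Xᵀ * PoissonJ n * X = PoissonJ 1
    ext ⟨i, hi⟩ ⟨j, hj⟩
    rw [transpose_mul_PoissonJ_mul_apply]
    have hi' : i = 0 ∨ i = 1 := by omega
    have hj' : j = 0 ∨ j = 1 := by omega
    rcases hi' with rfl | rfl <;> rcases hj' with rfl | rfl
    · rw [PoissonJ_form_self]; simp [PoissonJ]
    · rw [h]; simp [PoissonJ]
    · rw [PoissonJ_form_swap, h]; simp [PoissonJ]
    · rw [PoissonJ_form_self]; simp [PoissonJ]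

theorem PoissonJ_form_smul {m : ℕ} (a b : ℝ) (u v : Fin (2 * m) → ℝ) :
    (a • u) ⬝ᵥ (PoissonJ m *ᵥ (b • v)) = a * b * (u ⬝ᵥ (PoissonJ m *ᵥ v)) := by
  rw [Matrix.mulVec_smul, smul_dotProduct, dotProduct_smul, smul_eq_mul, smul_eq_mul, mul_assoc]

/-- **Theorem (DESR decomposition, existence and uniqueness).**
Let `A = [a₁, a₂] ∈ ℝ^{2n×2}` with `ω := a₁ᵀ J_{2n} a₂ ≠ 0`. Set `r₁₁ = √|ω|`,
`r₂₂ = sign(ω)·r₁₁`, `s₁ = a₁/r₁₁`, `s₂ = a₂/r₂₂`, `S = [s₁, s₂]`, `R = diag(r₁₁, r₂₂)`.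
Then `S ∈ Sp(2,2n)` and `A = S R`; moreover, this diagonal elementary SR decomposition is
unique among decompositions `A = S' diag(r'₁₁, r'₂₂)` with `S' ∈ Sp(2,2n)` and
`0 < r'₁₁ = |r'₂₂|`. -/
theorem desr_decomposition
    (n : ℕ) (A : Matrix (Fin (2 * n)) (Fin (2 * 1)) ℝ)
    (ω : ℝ)
    (hω : ω = (fun i => A i ⟨0, by omega⟩) ⬝ᵥ (PoissonJ n *ᵥ fun i => A i ⟨1, by omega⟩))
    (hω0 : ω ≠ 0)
    (r11 r22 : ℝ) (hr11 : r11 = Real.sqrt |ω|) (hr22 : r22 = Real.sign ω * r11)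
    (S : Matrix (Fin (2 * n)) (Fin (2 * 1)) ℝ)
    (hS : S = Matrix.of fun i (j : Fin (2 * 1)) =>
      if (j : ℕ) = 0 then A i ⟨0, by omega⟩ / r11 else A i ⟨1, by omega⟩ / r22)
    (R : Matrix (Fin (2 * 1)) (Fin (2 * 1)) ℝ)
    (hR : R = Matrix.diagonal fun j : Fin (2 * 1) => if (j : ℕ) = 0 then r11 else r22) :
    S ∈ SpStiefel 1 n ∧ A = S * R ∧
    ∀ (S' : Matrix (Fin (2 * n)) (Fin (2 * 1)) ℝ) (d1 d2 : ℝ),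
      S' ∈ SpStiefel 1 n → 0 < d1 → d1 = |d2| →
      A = S' * Matrix.diagonal (fun j : Fin (2 * 1) => if (j : ℕ) = 0 then d1 else d2) →
      S' = S ∧ d1 = r11 ∧ d2 = r22 := by
  have hpos : 0 < r11 := hr11 ▸ Real.sqrt_pos.2 (abs_pos.2 hω0)
  have hprod : r11 * r22 = ω := by
    have hsq : r11 * r11 = |ω| := hr11 ▸ Real.mul_self_sqrt (abs_nonneg ω)
    calc r11 * r22 = Real.sign ω * (r11 * r11) := by rw [hr22]; ring
      _ = ω := by
        rw [hsq]
        rcases lt_or_gt_of_ne hω0 with h | h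
        · rw [Real.sign_of_neg h, abs_of_neg h]; ring
        · rw [Real.sign_of_pos h, abs_of_pos h]; ring
  have hr22ne : r22 ≠ 0 := fun h => hω0 (by rw [← hprod, h, mul_zero])
  refine ⟨?_, ?_, ?_⟩
  · rw [mem_SpStiefel_one_iff _ (by omega) (by omega)]
    have h0 : (fun i => S i ⟨0, by omega⟩) = r11⁻¹ • fun i => A i ⟨0, by omega⟩ := by
      ext i; simp [hS, div_eq_inv_mul]
    have h1 : (fun i => S i ⟨1, by omega⟩) = r22⁻¹ • fun i => A i ⟨1, by omega⟩ := by
      ext i; simp [hS, div_eq_inv_mul]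
    rw [h0, h1, PoissonJ_form_smul, ← hω, ← hprod]
    field_simp
  · ext i ⟨j, hj⟩
    rw [hR, Matrix.mul_diagonal, hS]
    have hj' : j = 0 ∨ j = 1 := by omega
    rcases hj' with rfl | rfl
    · simp [hpos.ne']
    · simp [hr22ne]
  · intro S' d1 d2 hS' hd1 hd hA
    rw [mem_SpStiefel_one_iff _ (by omega) (by omega)] at hS'
    have h0 : (fun i => A i ⟨0, by omega⟩) = d1 • fun i => S' i ⟨0, by omega⟩ := by
      ext i; rw [hA, Matrix.mul_diagonal]; simp [mul_comm]
    have h1 : (fun i => A i ⟨1, by omega⟩) = d2 • fun i => S' i ⟨1, by omega⟩ := by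
      ext i; rw [hA, Matrix.mul_diagonal]; simp [mul_comm]
    have hω' : ω = d1 * d2 := by rw [hω, h0, h1, PoissonJ_form_smul, hS', mul_one]
    have e1 : d1 = r11 := by
      rw [hr11, hω', abs_mul, ← hd, abs_of_pos hd1, Real.sqrt_mul_self hd1.le]
    have e2 : d2 = r22 := by
      refine mul_left_cancel₀ hpos.ne' ?_
      rw [hprod, hω', e1]
    refine ⟨?_, e1, e2⟩
    ext i ⟨j, hj⟩
    have hj' : j = 0 ∨ j = 1 := by omega
    rcases hj' with rfl | rfl
    · have hi := congrFun h0 i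
      simp only [Pi.smul_apply, smul_eq_mul, e1] at hi
      simp only [hS, Matrix.of_apply, if_true]
      rw [hi, mul_div_cancel_left₀ _ hpos.ne']
    · have hi := congrFun h1 i
      simp only [Pi.smul_apply, smul_eq_mul, e2] at hi
      simp only [hS, Matrix.of_apply, one_ne_zero, if_false]
      rw [hi, mul_div_cancel_left₀ _ hr22ne]
end
end

section
/- Let X ∈ Sp(2k,2n) and let Z ∈ ℝ^{2n×2k} be a tangent vector to Sp(2k,2n) at X, i.e., Z^T J_{2n} X + X^T J_{2n} Z = 0. If ‖Z‖₂ < 1, where ‖·‖₂ is the spectral norm (ℓ²-operator norm), then X + Z has an SR decomposition: there exist S ∈ Sp(2k,2n) and R ∈ T_{2k}(P_{2k}) with X + Z = S R. -/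
/-!
With `A = X + Z`, tangency gives `Aᵀ J A = J + Zᵀ J Z =: M`. For every `v ≠ 0` one has
`vᵀ M Jᵀ v ≥ (1 - ‖Z‖₂²) |v|² > 0`, because `J` is orthogonal (`dot_pos_of_specNorm_lt_one`).
View `M` as a `k × k` matrix of `2 × 2` blocks, the pair `(i, i + k)` of indices forming the
`i`-th block index. A skew-symmetric `M` with this positivity property has a block Cholesky
factorisation `M = Rᵀ J R` with `R` block upper triangular and with upper triangular diagonal
blocks (`block_cholesky`): the leading block is `a • J₂` with `a > 0`, and both skew-symmetry and
positivity pass to the Schur complement. Positivity makes `M`, hence `R`, invertible, so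
`S = A R⁻¹` satisfies `Sᵀ J S = R⁻ᵀ M R⁻¹ = J`. The shape of `R` is membership in `Tset k`, since
the perfect shuffle sends the entry `b` of block `i` to position `2 i + b`.
-/

open Matrix

noncomputable section

/-- Index map of the perfect shuffle permutation: column `j` of `P_{2k}`
is the standard basis vector `e_{shuffleIdx k j}`. -/
def shuffleIdx (k : ℕ) (j : Fin (2 * k)) : Fin (2 * k) :=
  if h : (j : ℕ) < k then ⟨2 * (j : ℕ), by omega⟩
  else ⟨2 * ((j : ℕ) - k) + 1, by have hj := j.isLt; omega⟩

/-- The perfect shuffle permutation matrix `P_{2k} = [e_1, e_3, …, e_{2k-1}, e_2, …, e_{2k}]`. -/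
def shuffleP (k : ℕ) : Matrix (Fin (2 * k)) (Fin (2 * k)) ℝ :=
  Matrix.of fun i j => if i = shuffleIdx k j then 1 else 0

/-- The set `T_{2k}(P_{2k})` of perfect-shuffle congruences of upper triangular matrices. -/
def Tset (k : ℕ) : Set (Matrix (Fin (2 * k)) (Fin (2 * k)) ℝ) :=
  {R | ∃ Rhat : Matrix (Fin (2 * k)) (Fin (2 * k)) ℝ,
      (∀ i j : Fin (2 * k), (j : ℕ) < (i : ℕ) → Rhat i j = 0) ∧
      R = (shuffleP k)ᵀ * Rhat * shuffleP k}

/-- The spectral norm (ℓ²-operator norm) of a real matrix. -/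
def specNorm {p q : ℕ} (M : Matrix (Fin p) (Fin q) ℝ) : ℝ :=
  ‖LinearMap.toContinuousLinearMap (Matrix.toEuclideanLin M)‖

/-! ### Block Cholesky factorisation of skew-symmetric matrices -/

/-- The `2 × 2` Poisson matrix, indexed by `Fin 2` without the detour through `Fin (2 * 1)`. -/
def J2 : Matrix (Fin 2) (Fin 2) ℝ := !![0, 1; -1, 0]

/-- Skew block Cholesky factorisation. The positivity hypothesis says `vᵀ M Jᵀ v > 0` for every
nonzero block vector `v`. -/
theorem block_cholesky (k : ℕ) : ∀ (M : Fin k → Fin k → Matrix (Fin 2) (Fin 2) ℝ),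
    (∀ i j, (M i j)ᵀ = - M j i) →
    (∀ v : Fin k → Fin 2 → ℝ, v ≠ 0 →
      0 < ∑ j, (∑ i, v i ᵥ* M i j) ⬝ᵥ (J2ᵀ *ᵥ v j)) →
    ∃ R : Fin k → Fin k → Matrix (Fin 2) (Fin 2) ℝ,
      (∀ l j, j < l → R l j = 0) ∧ (∀ l, R l l 1 0 = 0) ∧
      ∀ i j, M i j = ∑ l, (R l i)ᵀ * J2 * R l j := by
  induction k with
  | zero => exact fun M _ _ => ⟨fun i => i.elim0, fun i => i.elim0, fun i => i.elim0,
      fun i => i.elim0⟩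
  | succ k ih =>
    intro M hskew hpos
    have hJt : J2ᵀ = - J2 := by
      ext a b; fin_cases a <;> fin_cases b <;> simp [J2]
    obtain ⟨a, ha⟩ : ∃ a, a = M 0 0 0 1 := ⟨_, rfl⟩
    have ha0 : 0 < a := by
      -- Test the positivity on the first coordinate vector.
      have h := hpos (Fin.cons ![1, 0] 0) (by
        intro h
        have := congrFun (congrFun h 0) 0
        simp at this)
      simp [Fin.sum_univ_succ, J2, vecMul, dotProduct, mulVec] at h
      rwa [ha]
    have hM00 : M 0 0 = !![0, a; -a, 0] := by
      have h := fun p q => congrFun (congrFun (hskew 0 0) p) q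
      simp only [transpose_apply, Matrix.neg_apply] at h
      have h00 := h 0 0
      have h11 := h 1 1
      have h01 := h 0 1
      ext p q
      fin_cases p <;> fin_cases q <;> simp <;> linarith
    obtain ⟨D, hD⟩ : ∃ D : Matrix (Fin 2) (Fin 2) ℝ, D = !![a, 0; 0, 1] := ⟨_, rfl⟩
    obtain ⟨E, hE⟩ : ∃ E : Matrix (Fin 2) (Fin 2) ℝ, E = !![a⁻¹, 0; 0, 1] := ⟨_, rfl⟩
    have hDE : D * E = 1 := by
      ext p q; fin_cases p <;> fin_cases q <;> simp [hD, hE, ha0.ne']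
    have hDt : Dᵀ = D := by
      ext p q; fin_cases p <;> fin_cases q <;> simp [hD]
    have hJJ : J2 * J2 = -1 := by
      ext p q; fin_cases p <;> fin_cases q <;> simp [J2]
    have hDJD : Dᵀ * J2 * D = M 0 0 := by
      rw [hM00]; ext p q; fin_cases p <;> fin_cases q <;> simp [hD, J2, mul_apply, Fin.sum_univ_two]
    -- `U j` solves `Dᵀ J₂ U j = M 0 (j + 1)`.
    obtain ⟨U, hU⟩ : ∃ U : Fin k → Matrix (Fin 2) (Fin 2) ℝ,
        ∀ j, Dᵀ * J2 * U j = M 0 j.succ := by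
      refine ⟨fun j => -(J2 * (E * M 0 j.succ)), fun j => ?_⟩
      rw [hDt, mul_neg, Matrix.mul_assoc, ← Matrix.mul_assoc J2 J2, hJJ, neg_mul, one_mul, mul_neg,
        neg_neg, ← Matrix.mul_assoc, hDE, one_mul]
    have hU' : ∀ i, (U i)ᵀ * J2 * D = M i.succ 0 := by
      intro i
      have h := congrArg transpose (hU i)
      rw [hskew, transpose_mul, transpose_mul, transpose_transpose, hJt, neg_mul, mul_neg,
        neg_inj, ← Matrix.mul_assoc] at h
      exact h
    obtain ⟨S, hS⟩ : ∃ S : Fin k → Fin k → Matrix (Fin 2) (Fin 2) ℝ,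
        ∀ i j, M i.succ j.succ = S i j + (U i)ᵀ * J2 * U j :=
      ⟨fun i j => M i.succ j.succ - (U i)ᵀ * J2 * U j, fun i j => by simp⟩
    obtain ⟨R, hR1, hR2, hR3⟩ := ih S (by
      intro i j
      have h := hskew i.succ j.succ
      rw [hS, hS, transpose_add, transpose_mul, transpose_mul, transpose_transpose, hJt,
        neg_mul, mul_neg, neg_add, ← Matrix.mul_assoc] at h
      exact add_right_cancel h) (by
      intro y hy
      -- Extend `y` by the block `x` that annihilates the first block of `vᵀ M`.
      obtain ⟨x, hx⟩ : ∃ x : Fin 2 → ℝ, x ᵥ* Dᵀ = - ∑ i, y i ᵥ* (U i)ᵀ := by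
        refine ⟨(- ∑ i, y i ᵥ* (U i)ᵀ) ᵥ* E, ?_⟩
        rw [vecMul_vecMul, hDt, mul_eq_one_comm.mp hDE, vecMul_one]
      have h := hpos (Fin.cons x y) (by
        intro h
        apply hy
        funext i
        simpa using congrFun h i.succ)
      have hkill : ∀ B : Matrix (Fin 2) (Fin 2) ℝ,
          x ᵥ* (Dᵀ * B) + ∑ i, y i ᵥ* ((U i)ᵀ * B) = 0 := by
        intro B
        simp only [← vecMul_vecMul, hx, neg_vecMul, sum_vecMul]
        simp
      have h0 : x ᵥ* M 0 0 + ∑ i, y i ᵥ* M (Fin.succ i) 0 = 0 := by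
        simpa only [← hDJD, ← hU', Matrix.mul_assoc] using hkill (J2 * D)
      have h1 : ∀ j : Fin k, x ᵥ* M 0 j.succ + ∑ i, y i ᵥ* M (Fin.succ i) j.succ
          = ∑ i, y i ᵥ* S i j := by
        intro j
        have := hkill (J2 * U j)
        simp only [hS, ← hU, vecMul_add, Finset.sum_add_distrib, Matrix.mul_assoc]
        rw [add_left_comm, this, add_zero]
      simpa only [Fin.sum_univ_succ, Fin.cons_zero, Fin.cons_succ, h0, h1, zero_dotProduct,
        zero_add] using h)
    refine ⟨Fin.cons (Fin.cons D U) (fun l => Fin.cons 0 (R l)), ?_, ?_, ?_⟩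
    · intro l j
      refine Fin.cases ?_ (fun l => ?_) l <;> refine Fin.cases ?_ (fun j => ?_) j
      · simp
      · simp
      · simp
      · simpa using hR1 l j
    · intro l
      refine Fin.cases ?_ (fun l => ?_) l
      · simp [hD]
      · simpa using hR2 l
    · intro i j
      refine Fin.cases ?_ (fun i => ?_) i <;> refine Fin.cases ?_ (fun j => ?_) j
      · simp [Fin.sum_univ_succ, hDJD]
      · simp [Fin.sum_univ_succ, hU]
      · simp [Fin.sum_univ_succ, hU']
      · simp only [Fin.sum_univ_succ, Fin.cons_zero, Fin.cons_succ, hS, hR3]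
        rw [add_comm]

/-! ### The Poisson matrix and the perfect shuffle in block coordinates -/

theorem poissonJ_block (m : ℕ) (p q : Fin 2 × Fin m) :
    PoissonJ m (finProdFinEquiv p) (finProdFinEquiv q) =
      if p.2 = q.2 then J2 p.1 q.1 else 0 := by
  obtain ⟨a, i⟩ := p
  obtain ⟨b, j⟩ := q
  have hi := i.isLt
  have hj := j.isLt
  simp only [PoissonJ, of_apply, finProdFinEquiv_apply_val, Fin.ext_iff]
  fin_cases a <;> fin_cases b <;> simp [J2] <;> grind

theorem poissonJ_transpose (m : ℕ) : (PoissonJ m)ᵀ = - PoissonJ m := by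
  ext p q
  obtain ⟨p, rfl⟩ := finProdFinEquiv.surjective p
  obtain ⟨q, rfl⟩ := finProdFinEquiv.surjective q
  obtain ⟨a, i⟩ := p
  obtain ⟨b, j⟩ := q
  simp only [transpose_apply, Matrix.neg_apply, poissonJ_block, eq_comm (a := j)]
  by_cases h : i = j <;> fin_cases a <;> fin_cases b <;> simp [J2, h]

theorem poissonJ_mul_transpose (m : ℕ) : PoissonJ m * (PoissonJ m)ᵀ = 1 := by
  ext p q
  obtain ⟨p, rfl⟩ := finProdFinEquiv.surjective p
  obtain ⟨q, rfl⟩ := finProdFinEquiv.surjective q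
  obtain ⟨a, i⟩ := p
  obtain ⟨b, j⟩ := q
  simp only [mul_apply, transpose_apply, one_apply, EmbeddingLike.apply_eq_iff_eq]
  rw [← finProdFinEquiv.sum_comp]
  simp only [poissonJ_block, Fintype.sum_prod_type, Fin.sum_univ_two]
  by_cases h : i = j <;> fin_cases a <;> fin_cases b <;> simp [J2, h, eq_comm]

theorem shuffleIdx_block (k : ℕ) (p : Fin 2 × Fin k) :
    (shuffleIdx k (finProdFinEquiv p) : ℕ) = 2 * p.2 + p.1 := by
  obtain ⟨a, i⟩ := p
  have hi := i.isLt
  unfold shuffleIdx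
  fin_cases a <;> simp

theorem shuffleIdx_injective (k : ℕ) : Function.Injective (shuffleIdx k) := by
  intro p q h
  obtain ⟨p, rfl⟩ := finProdFinEquiv.surjective p
  obtain ⟨q, rfl⟩ := finProdFinEquiv.surjective q
  have h' := congrArg Fin.val h
  rw [shuffleIdx_block, shuffleIdx_block] at h'
  have h1 := p.1.isLt
  have h2 := q.1.isLt
  congr 1
  ext <;> omega

/-- Membership in `Tset k`, read off after relabelling rows and columns by the shuffle. -/
theorem mem_Tset_of_shuffle {k : ℕ} (R : Matrix (Fin (2 * k)) (Fin (2 * k)) ℝ)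
    (h : ∀ p q, (shuffleIdx k q : ℕ) < shuffleIdx k p → R p q = 0) : R ∈ Tset k := by
  let σ : Fin (2 * k) ≃ Fin (2 * k) :=
    Equiv.ofBijective (shuffleIdx k) (Finite.injective_iff_bijective.mp (shuffleIdx_injective k))
  have hσ : ∀ p, σ p = shuffleIdx k p := fun _ => rfl
  refine ⟨of fun i j => R (σ.symm i) (σ.symm j), fun i j hij => h _ _ ?_, ?_⟩
  · rw [← hσ, ← hσ]
    simpa using hij
  · ext p q
    simp [mul_apply, shuffleP, ← hσ]

/-! ### Positivity from the spectral norm bound -/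

theorem mulVec_dot_le {p q : ℕ} (Z : Matrix (Fin p) (Fin q) ℝ) (v : Fin q → ℝ) :
    (Z *ᵥ v) ⬝ᵥ (Z *ᵥ v) ≤ specNorm Z ^ 2 * (v ⬝ᵥ v) := by
  have h := (LinearMap.toContinuousLinearMap (Matrix.toEuclideanLin Z)).le_opNorm
    (WithLp.toLp 2 v)
  have h2 := pow_le_pow_left₀ (norm_nonneg _) h 2
  rw [mul_pow, EuclideanSpace.norm_sq_eq, EuclideanSpace.norm_sq_eq] at h2
  simpa [dotProduct, specNorm, sq] using h2

/-- Since `J` is orthogonal, `vᵀ (J + Zᵀ J Z) Jᵀ v ≥ (1 - ‖Z‖₂²) |v|²`. -/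
theorem dot_pos_of_specNorm_lt_one {k n : ℕ} (Z : Matrix (Fin (2 * n)) (Fin (2 * k)) ℝ)
    (hZ : specNorm Z < 1) (v : Fin (2 * k) → ℝ) (hv : v ≠ 0) :
    0 < (v ᵥ* (PoissonJ k + Zᵀ * PoissonJ n * Z)) ⬝ᵥ ((PoissonJ k)ᵀ *ᵥ v) := by
  have hvv : 0 < v ⬝ᵥ v := by
    simpa using (dotProduct_star_self_pos_iff (v := v)).mpr hv
  have iso : ∀ (m : ℕ) (w : Fin (2 * m) → ℝ),
      ((PoissonJ m)ᵀ *ᵥ w) ⬝ᵥ ((PoissonJ m)ᵀ *ᵥ w) = w ⬝ᵥ w := by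
    intro m w
    rw [dotProduct_mulVec, vecMul_transpose, mulVec_mulVec, poissonJ_mul_transpose, one_mulVec]
  obtain ⟨u, hu⟩ : ∃ u, u = (PoissonJ k)ᵀ *ᵥ v := ⟨_, rfl⟩
  have huu : u ⬝ᵥ u = v ⬝ᵥ v := by rw [hu, iso]
  have h1 : (v ᵥ* PoissonJ k) ⬝ᵥ u = v ⬝ᵥ v := by
    rw [hu, ← iso k v, mulVec_transpose]
  have h2 : (v ᵥ* (Zᵀ * PoissonJ n * Z)) ⬝ᵥ u
      = ((PoissonJ n)ᵀ *ᵥ (Z *ᵥ v)) ⬝ᵥ (Z *ᵥ u) := by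
    rw [← vecMul_vecMul, ← vecMul_vecMul, vecMul_transpose, mulVec_transpose, dotProduct_mulVec]
  obtain ⟨x, hx⟩ : ∃ x, x = (PoissonJ n)ᵀ *ᵥ (Z *ᵥ v) := ⟨_, rfl⟩
  have h3 : x ⬝ᵥ x ≤ specNorm Z ^ 2 * (v ⬝ᵥ v) := by
    rw [hx, iso]; exact mulVec_dot_le Z v
  have h4 := mulVec_dot_le Z u
  rw [huu] at h4
  have h5 : 0 ≤ (x + Z *ᵥ u) ⬝ᵥ (x + Z *ᵥ u) := by
    simpa using dotProduct_star_self_nonneg (x + Z *ᵥ u)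
  rw [add_dotProduct, dotProduct_add, dotProduct_add, dotProduct_comm (Z *ᵥ u) x] at h5
  have h6 : specNorm Z ^ 2 < 1 := by
    have : 0 ≤ specNorm Z := norm_nonneg _
    nlinarith
  rw [← hu, vecMul_add, add_dotProduct, h1, h2, ← hx]
  nlinarith

/-! ### The SR decomposition -/

/-- The factorisation of `block_cholesky`, transported to `Fin (2 * k)` along
`(b, i) ↦ b * k + i`. -/
theorem exists_factor {k : ℕ} (M : Matrix (Fin (2 * k)) (Fin (2 * k)) ℝ) (hM : Mᵀ = - M)
    (hpos : ∀ v : Fin (2 * k) → ℝ, v ≠ 0 → 0 < (v ᵥ* M) ⬝ᵥ ((PoissonJ k)ᵀ *ᵥ v)) :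
    ∃ R ∈ Tset k, M = Rᵀ * PoissonJ k * R := by
  obtain ⟨R, h1, h2, h3⟩ := block_cholesky k
    (fun i j => of fun a b => M (finProdFinEquiv (a, i)) (finProdFinEquiv (b, j)))
    (by
      intro i j
      ext a b
      exact congrFun (congrFun hM _) _)
    (by
      intro v hv
      have h := hpos (fun p => v (finProdFinEquiv.symm p).2 (finProdFinEquiv.symm p).1) (by
        intro h
        apply hv
        funext i a
        simpa using congrFun h (finProdFinEquiv (a, i)))
      convert h using 1
      simp only [dotProduct, vecMul, mulVec, transpose_apply, ← finProdFinEquiv.sum_comp,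
        Equiv.symm_apply_apply, poissonJ_block, Fintype.sum_prod_type_right, Finset.sum_apply]
      simp)
  refine ⟨of fun p q => R (finProdFinEquiv.symm p).2 (finProdFinEquiv.symm q).2
    (finProdFinEquiv.symm p).1 (finProdFinEquiv.symm q).1, mem_Tset_of_shuffle _ ?_, ?_⟩
  · intro p q
    obtain ⟨⟨a, i⟩, rfl⟩ := finProdFinEquiv.surjective p
    obtain ⟨⟨b, j⟩, rfl⟩ := finProdFinEquiv.surjective q
    rw [shuffleIdx_block, shuffleIdx_block]
    simp only [of_apply, Equiv.symm_apply_apply]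
    intro h
    rcases lt_trichotomy j i with hji | rfl | hji
    · rw [h1 i j hji]; rfl
    · have ha : a = 1 := by ext; simp; omega
      have hb : b = 0 := by ext; simp; omega
      rw [ha, hb, h2]
    · have := Fin.lt_def.mp hji
      omega
  · ext p q
    obtain ⟨⟨a, i⟩, rfl⟩ := finProdFinEquiv.surjective p
    obtain ⟨⟨b, j⟩, rfl⟩ := finProdFinEquiv.surjective q
    have h := congrFun (congrFun (h3 i j) a) b
    rw [of_apply] at h
    rw [h]
    simp only [mul_apply, transpose_apply, ← finProdFinEquiv.sum_comp, of_apply,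
      Equiv.symm_apply_apply, poissonJ_block, Fintype.sum_prod_type_right, Matrix.sum_apply]
    simp

/-- **Theorem (domain of the SR retraction contains the open unit ball).**
Let `X ∈ Sp(2k,2n)` and let `Z` be a tangent vector to `Sp(2k,2n)` at `X`. If `‖Z‖₂ < 1`,
then `X + Z` has an SR decomposition. -/
theorem sr_retraction_exists_on_unit_ball
    (k n : ℕ)
    (X : Matrix (Fin (2 * n)) (Fin (2 * k)) ℝ) (hX : X ∈ SpStiefel k n)
    (Z : Matrix (Fin (2 * n)) (Fin (2 * k)) ℝ)
    (hZ : Zᵀ * PoissonJ n * X + Xᵀ * PoissonJ n * Z = 0)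
    (hZnorm : specNorm Z < 1) :
    ∃ S ∈ SpStiefel k n, ∃ R ∈ Tset k, X + Z = S * R := by
  have hX' : Xᵀ * PoissonJ n * X = PoissonJ k := hX
  have hM : (X + Z)ᵀ * PoissonJ n * (X + Z) = PoissonJ k + Zᵀ * PoissonJ n * Z := by
    rw [transpose_add, Matrix.add_mul, Matrix.add_mul, Matrix.mul_add, Matrix.mul_add, hX']
    calc PoissonJ k + Xᵀ * PoissonJ n * Z + (Zᵀ * PoissonJ n * X + Zᵀ * PoissonJ n * Z)
        = PoissonJ k + (Zᵀ * PoissonJ n * X + Xᵀ * PoissonJ n * Z) + Zᵀ * PoissonJ n * Z := by abel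
      _ = _ := by rw [hZ, add_zero]
  have hpos := dot_pos_of_specNorm_lt_one Z hZnorm
  rw [← hM] at hpos
  obtain ⟨R, hRT, hR⟩ := exists_factor ((X + Z)ᵀ * PoissonJ n * (X + Z)) (by
    rw [transpose_mul, transpose_mul, transpose_transpose, poissonJ_transpose, Matrix.neg_mul,
      Matrix.mul_neg, Matrix.mul_assoc]) hpos
  have hdet : IsUnit R.det := by
    rw [isUnit_iff_ne_zero]
    intro h0
    have hMdet : ((X + Z)ᵀ * PoissonJ n * (X + Z)).det = 0 := by
      rw [hR, det_mul, h0, mul_zero]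
    obtain ⟨v, hv, hv0⟩ := exists_vecMul_eq_zero_iff.mpr hMdet
    have := hpos v hv
    rw [hv0, zero_dotProduct] at this
    exact lt_irrefl _ this
  refine ⟨(X + Z) * R⁻¹, ?_, R, hRT, ?_⟩
  · have hdet' : IsUnit Rᵀ.det := by rwa [det_transpose]
    calc ((X + Z) * R⁻¹)ᵀ * PoissonJ n * ((X + Z) * R⁻¹)
        = (R⁻¹)ᵀ * ((X + Z)ᵀ * PoissonJ n * (X + Z)) * R⁻¹ := by
          rw [transpose_mul]; simp only [Matrix.mul_assoc]
      _ = ((Rᵀ)⁻¹ * Rᵀ) * PoissonJ k * (R * R⁻¹) := by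
          rw [hR, transpose_nonsing_inv]; simp only [Matrix.mul_assoc]
      _ = PoissonJ k := by
          rw [nonsing_inv_mul _ hdet', mul_nonsing_inv _ hdet, Matrix.one_mul, Matrix.mul_one]
  · rw [Matrix.mul_assoc, nonsing_inv_mul _ hdet, Matrix.mul_one]
end
end
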